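/- arXiv:2312.13023 — 6 statements merged into one kernel-verified Lean document; each statement's English description precedes it below -/
import Mathlib

section
/- Let Z and X be nonempty finite types and let p : Z × X → ℝ be a joint probability mass function (p is nonnegative and sums to 1) whose marginals p_Z(z) = Σ_x p(z,x) and p_X(x) = Σ_z p(z,x) are strictly positive, and suppose p(z,x) > 0 for all z, x. Define the conditional probability p(x|z) = p(z,x)/p_Z(z), the mutual information MI(Z,X) = Σ_{z,x} p(z,x) · log( p(z,x) / (p_Z(z) · p_X(x)) ), and the quantity L_UB = Σ_{z,x} p(z,x) · log p(x|z) − Σ_{z,x} p_Z(z) · p_X(x) · log p(x|z). Then MI(Z,X) ≤ L_UB. -/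
open Real Finset

/-- For a strictly positive joint pmf `p` on `Z × X` with marginals `pZ`, `pX`
and conditional `pc z x = p (z,x) / pZ z`, the mutual information
`MI(Z,X) = Σ_{z,x} p(z,x) log (p(z,x) / (pZ z * pX x))` is bounded above by
`L_UB = Σ_{z,x} p(z,x) log (pc z x) − Σ_{z,x} pZ z * pX x * log (pc z x)`. -/
theorem mi_le_LUB {Z X : Type*} [Fintype Z] [Fintype X] [Nonempty Z] [Nonempty X]
    (p : Z × X → ℝ) (pZ : Z → ℝ) (pX : X → ℝ) (pc : Z → X → ℝ)
    (hnonneg : ∀ z x, 0 ≤ p (z, x))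
    (hpos : ∀ z x, 0 < p (z, x))
    (hsum : ∑ zx : Z × X, p zx = 1)
    (hpZ : ∀ z, pZ z = ∑ x : X, p (z, x))
    (hpX : ∀ x, pX x = ∑ z : Z, p (z, x))
    (hpZpos : ∀ z, 0 < pZ z)
    (hpXpos : ∀ x, 0 < pX x)
    (hpc : ∀ z x, pc z x = p (z, x) / pZ z) :
    (∑ z : Z, ∑ x : X, p (z, x) * Real.log (p (z, x) / (pZ z * pX x))) ≤
      (∑ z : Z, ∑ x : X, p (z, x) * Real.log (pc z x)) -
        (∑ z : Z, ∑ x : X, pZ z * pX x * Real.log (pc z x)) := by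
  have hZ1 : ∑ z : Z, pZ z = 1 := by
    rw [← hsum, Fintype.sum_prod_type]
    exact Finset.sum_congr rfl fun z _ => hpZ z
  have hX1 : ∑ x : X, pX x = 1 := by
    rw [← hsum, Fintype.sum_prod_type_right]
    exact Finset.sum_congr rfl fun x _ => hpX x
  have hA : ∑ z : Z, ∑ x : X, p (z, x) * Real.log (pX x) = ∑ x : X, pX x * Real.log (pX x) := by
    rw [Finset.sum_comm]
    refine Finset.sum_congr rfl fun x _ => ?_
    rw [← Finset.sum_mul, ← hpX]
  have hB : ∑ z : Z, ∑ x : X, pZ z * pX x * Real.log (pX x)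
      = ∑ x : X, pX x * Real.log (pX x) := by
    simp_rw [mul_assoc, ← Finset.mul_sum]
    rw [← Finset.sum_mul, hZ1, one_mul]
  have hP : ∑ z : Z, ∑ x : X, p (z, x) = 1 := by
    rw [← hsum, Fintype.sum_prod_type]
  have hQ : ∑ z : Z, ∑ x : X, pZ z * pX x = 1 := by
    simp_rw [← Finset.mul_sum, hX1, mul_one, hZ1]
  have hM : ∑ z : Z, ∑ x : X, p (z, x) * Real.log (p (z, x) / (pZ z * pX x))
      = ∑ z : Z, ∑ x : X, p (z, x) * Real.log (pc z x)
        - ∑ z : Z, ∑ x : X, p (z, x) * Real.log (pX x) := by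
    simp_rw [← Finset.sum_sub_distrib]
    refine Finset.sum_congr rfl fun z _ => Finset.sum_congr rfl fun x _ => ?_
    rw [← div_div, ← hpc, Real.log_div _ (hpXpos x).ne', mul_sub]
    rw [hpc]
    exact (div_pos (hpos z x) (hpZpos z)).ne'
  have hL : ∑ z : Z, ∑ x : X, pZ z * pX x * Real.log (pc z x)
      ≤ ∑ z : Z, ∑ x : X, (pZ z * pX x * Real.log (pX x) + (p (z, x) - pZ z * pX x)) := by
    refine Finset.sum_le_sum fun z _ => Finset.sum_le_sum fun x _ => ?_
    have hc : 0 < pc z x := by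
      rw [hpc]
      exact div_pos (hpos z x) (hpZpos z)
    have hz := hpZpos z
    have hx := hpXpos x
    have h := Real.log_le_sub_one_of_pos (div_pos hc hx)
    rw [Real.log_div hc.ne' hx.ne'] at h
    have h2 := mul_le_mul_of_nonneg_left h (mul_pos hz hx).le
    have h3 : pZ z * pX x * (pc z x / pX x - 1) = p (z, x) - pZ z * pX x := by
      rw [hpc]
      field_simp
    rw [h3] at h2
    linarith
  simp_rw [Finset.sum_add_distrib, Finset.sum_sub_distrib] at hL
  rw [hB, hP, hQ] at hL
  rw [hM, hA]
  linarith
end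

section
/- Let Z and X be nonempty finite types and let p : Z × X → ℝ be a joint probability mass function with p(z,x) > 0 for all z, x. With p_Z, p_X the marginals, p(x|z) = p(z,x)/p_Z(z) the conditional, MI(Z,X) = Σ_{z,x} p(z,x) · log( p(z,x) / (p_Z(z) · p_X(x)) ), and L_UB = Σ_{z,x} p(z,x) · log p(x|z) − Σ_{z,x} p_Z(z) · p_X(x) · log p(x|z), equality MI(Z,X) = L_UB holds if and only if Z and X are independent, i.e. p(z,x) = p_Z(z) · p_X(x) for all z, x. -/
open Real Finset

/-- For a strictly positive joint pmf `p` on `Z × X`, equality `MI(Z,X) = L_UB`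
holds if and only if `Z` and `X` are independent, i.e. `p (z,x) = pZ z * pX x` for all `z, x`. -/
theorem mi_eq_LUB_iff_indep {Z X : Type*} [Fintype Z] [Fintype X] [Nonempty Z] [Nonempty X]
    (p : Z × X → ℝ) (pZ : Z → ℝ) (pX : X → ℝ) (pc : Z → X → ℝ)
    (hpos : ∀ z x, 0 < p (z, x))
    (hsum : ∑ zx : Z × X, p zx = 1)
    (hpZ : ∀ z, pZ z = ∑ x : X, p (z, x))
    (hpX : ∀ x, pX x = ∑ z : Z, p (z, x))
    (hpc : ∀ z x, pc z x = p (z, x) / pZ z) :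
    ((∑ z : Z, ∑ x : X, p (z, x) * Real.log (p (z, x) / (pZ z * pX x))) =
        (∑ z : Z, ∑ x : X, p (z, x) * Real.log (pc z x)) -
          (∑ z : Z, ∑ x : X, pZ z * pX x * Real.log (pc z x)))
      ↔ (∀ z x, p (z, x) = pZ z * pX x) := by
  have hZpos : ∀ z, 0 < pZ z := fun z => by
    rw [hpZ]; exact Finset.sum_pos (fun x _ => hpos z x) Finset.univ_nonempty
  have hXpos : ∀ x, 0 < pX x := fun x => by
    rw [hpX]; exact Finset.sum_pos (fun z _ => hpos z x) Finset.univ_nonempty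
  have hZ1 : ∑ z, pZ z = 1 := by
    simp_rw [hpZ]; rw [← hsum, Fintype.sum_prod_type]
  -- sums against a function of x only agree
  have hmarg : ∀ f : X → ℝ, ∑ z, ∑ x, (pZ z * pX x - p (z, x)) * f x = 0 := by
    intro f
    rw [Finset.sum_comm]
    apply Finset.sum_eq_zero
    intro x _
    rw [← Finset.sum_mul, Finset.sum_sub_distrib, ← Finset.sum_mul, hZ1, ← hpX]
    ring
  have hkey : ((∑ z : Z, ∑ x : X, p (z, x) * Real.log (pc z x)) -
          (∑ z : Z, ∑ x : X, pZ z * pX x * Real.log (pc z x))) -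
        (∑ z : Z, ∑ x : X, p (z, x) * Real.log (p (z, x) / (pZ z * pX x))) =
      ∑ z, ∑ x, pZ z * pX x * (p (z, x) / (pZ z * pX x) - 1 -
        Real.log (p (z, x) / (pZ z * pX x))) := by
    have h1 := hmarg (fun x => 1 - Real.log (pX x))
    rw [← sub_eq_zero, ← h1]
    simp only [← Finset.sum_sub_distrib]
    refine Finset.sum_congr rfl fun z _ => Finset.sum_congr rfl fun x _ => ?_
    have hz := (hZpos z).ne'
    have hx := (hXpos x).ne'
    have hp := (hpos z x).ne'
    have e : pZ z * pX x * (p (z, x) / (pZ z * pX x)) = p (z, x) := by field_simp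
    rw [hpc, Real.log_div hp hz, Real.log_div hp (mul_ne_zero hz hx), Real.log_mul hz hx] 
    linear_combination (-1) * e
  have hnn : ∀ z x, 0 ≤ pZ z * pX x * (p (z, x) / (pZ z * pX x) - 1 -
        Real.log (p (z, x) / (pZ z * pX x))) := fun z x => by
    have hq := mul_pos (hZpos z) (hXpos x)
    have := Real.log_le_sub_one_of_pos (div_pos (hpos z x) hq)
    exact mul_nonneg hq.le (by linarith)
  constructor
  · intro h z x
    rw [h, sub_self] at hkey
    have h1 := (Finset.sum_eq_zero_iff_of_nonneg
      (fun z _ => Finset.sum_nonneg fun x _ => hnn z x)).1 hkey.symm z (Finset.mem_univ z)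
    have h2 := (Finset.sum_eq_zero_iff_of_nonneg (fun x _ => hnn z x)).1 h1 x (Finset.mem_univ x)
    have hq := mul_pos (hZpos z) (hXpos x)
    have h3 := (mul_eq_zero.1 h2).resolve_left hq.ne'
    by_contra hne
    have := Real.log_lt_sub_one_of_pos (div_pos (hpos z x) hq)
      (fun h => hne ((div_eq_one_iff_eq hq.ne').1 h))
    linarith
  · intro h
    symm
    rw [← sub_eq_zero, hkey]
    refine Finset.sum_eq_zero fun z _ => Finset.sum_eq_zero fun x _ => ?_
    rw [h, div_self (mul_pos (hZpos z) (hXpos x)).ne']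
    simp
end

section
/- Let Y and Z be nonempty finite types and let p : Y × Z → ℝ be a joint probability mass function with p(y,z) > 0 for all y, z, with marginals p_Y(y) = Σ_z p(y,z) and p_Z(z) = Σ_y p(y,z). Define MI(Z,Y) = Σ_{y,z} p(y,z) · log( p(y,z) / (p_Y(y) · p_Z(z)) ). Then for every function F : Y × Z → ℝ, MI(Z,Y) ≥ Σ_{y,z} p(y,z) · F(y,z) − log( Σ_{y,z} p_Y(y) · p_Z(z) · exp(F(y,z)) ). -/
open Real Finset

/-- Donsker–Varadhan lower bound: for a strictly positive joint pmf `p` on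
`Y × Z` with marginals `pY`, `pZ`, for every `F : Y × Z → ℝ`,
`MI(Z,Y) ≥ Σ_{y,z} p(y,z) F(y,z) − log (Σ_{y,z} pY y * pZ z * exp (F (y,z)))`. -/
theorem mi_ge_donsker_varadhan {Y Z : Type*} [Fintype Y] [Fintype Z] [Nonempty Y] [Nonempty Z]
    (p : Y × Z → ℝ) (pY : Y → ℝ) (pZ : Z → ℝ)
    (hpos : ∀ y z, 0 < p (y, z))
    (hsum : ∑ yz : Y × Z, p yz = 1)
    (hpY : ∀ y, pY y = ∑ z : Z, p (y, z))
    (hpZ : ∀ z, pZ z = ∑ y : Y, p (y, z)) :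
    ∀ F : Y × Z → ℝ,
      (∑ y : Y, ∑ z : Z, p (y, z) * Real.log (p (y, z) / (pY y * pZ z))) ≥
        (∑ y : Y, ∑ z : Z, p (y, z) * F (y, z)) -
          Real.log (∑ y : Y, ∑ z : Z, pY y * pZ z * Real.exp (F (y, z))) := by
  intro F
  have hY : ∀ y, 0 < pY y := fun y => by
    rw [hpY]; exact Finset.sum_pos (fun z _ => hpos y z) Finset.univ_nonempty
  have hZ : ∀ z, 0 < pZ z := fun z => by
    rw [hpZ]; exact Finset.sum_pos (fun y _ => hpos y z) Finset.univ_nonempty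
  rw [Fintype.sum_prod_type] at hsum
  set S := ∑ y : Y, ∑ z : Z, pY y * pZ z * Real.exp (F (y, z)) with hS
  have hSpos : 0 < S := Finset.sum_pos (fun y _ => Finset.sum_pos (fun z _ =>
    mul_pos (mul_pos (hY y) (hZ z)) (Real.exp_pos _)) Finset.univ_nonempty) Finset.univ_nonempty
  have key : ∀ y z, p (y, z) * F (y, z) - p (y, z) * Real.log S
      - (pY y * pZ z * Real.exp (F (y, z))) / S + p (y, z)
      ≤ p (y, z) * Real.log (p (y, z) / (pY y * pZ z)) := by
    intro y z
    have hp := hpos y z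
    have hq := mul_pos (hY y) (hZ z)
    have he := Real.exp_pos (F (y, z))
    have h := Real.log_le_sub_one_of_pos
      (div_pos (mul_pos hq he) (mul_pos hp hSpos))
    rw [Real.log_div (mul_pos hq he).ne' (mul_pos hp hSpos).ne', Real.log_mul hq.ne' he.ne',
      Real.log_mul hp.ne' hSpos.ne', Real.log_exp] at h
    rw [Real.log_div hp.ne' hq.ne']
    have h2 := mul_le_mul_of_nonneg_left h hp.le
    have h3 : p (y, z) * (pY y * pZ z * Real.exp (F (y, z)) / (p (y, z) * S) - 1)
        = (pY y * pZ z * Real.exp (F (y, z))) / S - p (y, z) := by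
      field_simp
    rw [h3] at h2
    linarith
  have hle := Finset.sum_le_sum (s := Finset.univ) fun y _ =>
    Finset.sum_le_sum (s := Finset.univ) fun z _ => key y z
  simp only [Finset.sum_add_distrib, Finset.sum_sub_distrib, ← Finset.sum_mul,
    ← Finset.sum_div, hsum] at hle
  rw [← hS, div_self hSpos.ne'] at hle
  linarith
end

section
/- Let Y and Z be nonempty finite types and let p : Y × Z → ℝ be a joint probability mass function with p(y,z) > 0 for all y, z, with marginals p_Y, p_Z, and define MI(Z,Y) = Σ_{y,z} p(y,z) · log( p(y,z) / (p_Y(y) · p_Z(z)) ). Then the supremum over all functions F : Y × Z → ℝ of the Donsker–Varadhan functional equals the mutual information: ⨆_{F : Y × Z → ℝ} ( Σ_{y,z} p(y,z) · F(y,z) − log( Σ_{y,z} p_Y(y) · p_Z(z) · exp(F(y,z)) ) ) = MI(Z,Y). -/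
open Real Finset

lemma dv_le_aux {ι : Type*} [Fintype ι] (p q F : ι → ℝ)
    (hp : ∀ i, 0 < p i) (hq : ∀ i, 0 < q i) (hsum : ∑ i, p i = 1) :
    (∑ i, p i * F i) - Real.log (∑ i, q i * Real.exp (F i)) ≤
      ∑ i, p i * Real.log (p i / q i) := by
  have hne : (Finset.univ : Finset ι).Nonempty := by
    by_contra h
    rw [Finset.not_nonempty_iff_eq_empty] at h
    simp [h] at hsum
  set S := ∑ i, q i * Real.exp (F i) with hS
  have hSpos : 0 < S := Finset.sum_pos (fun i _ => mul_pos (hq i) (Real.exp_pos _)) hne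
  have key : ∀ i, p i * F i - p i * Real.log S - p i * Real.log (p i / q i) ≤
      q i * Real.exp (F i) / S - p i := by
    intro i
    have hpi := hp i
    have hqi := hq i
    have h1 : 0 < q i * Real.exp (F i) / (S * p i) := by positivity
    have h2 := Real.log_le_sub_one_of_pos h1
    have h3 : Real.log (q i * Real.exp (F i) / (S * p i)) =
        F i - Real.log S - Real.log (p i / q i) := by
      rw [Real.log_div (by positivity) (by positivity), Real.log_mul hqi.ne' (Real.exp_pos _).ne',
        Real.log_mul hSpos.ne' hpi.ne', Real.log_exp, Real.log_div hpi.ne' hqi.ne']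
      ring
    rw [h3] at h2
    have h4 := mul_le_mul_of_nonneg_left h2 hpi.le
    have h5 : p i * (q i * Real.exp (F i) / (S * p i) - 1) =
        q i * Real.exp (F i) / S - p i := by
      field_simp
    rw [h5] at h4
    linarith
  have h := Finset.sum_le_sum (fun i (_ : i ∈ Finset.univ) => key i)
  simp only [Finset.sum_sub_distrib] at h
  rw [← Finset.sum_mul, ← Finset.sum_div, ← hS, hsum, div_self hSpos.ne'] at h
  linarith

/-- The supremum over all `F : Y × Z → ℝ` of the Donsker–Varadhan functional
equals the mutual information `MI(Z,Y)`. -/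
theorem donsker_varadhan_iSup_eq_mi {Y Z : Type*} [Fintype Y] [Fintype Z]
    [Nonempty Y] [Nonempty Z]
    (p : Y × Z → ℝ) (pY : Y → ℝ) (pZ : Z → ℝ)
    (hpos : ∀ y z, 0 < p (y, z))
    (hsum : ∑ yz : Y × Z, p yz = 1)
    (hpY : ∀ y, pY y = ∑ z : Z, p (y, z))
    (hpZ : ∀ z, pZ z = ∑ y : Y, p (y, z)) :
    (⨆ F : Y × Z → ℝ,
        ((∑ y : Y, ∑ z : Z, p (y, z) * F (y, z)) -
          Real.log (∑ y : Y, ∑ z : Z, pY y * pZ z * Real.exp (F (y, z))))) =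
      ∑ y : Y, ∑ z : Z, p (y, z) * Real.log (p (y, z) / (pY y * pZ z)) := by
  have hYpos : ∀ y, 0 < pY y := fun y => by
    rw [hpY]; exact Finset.sum_pos (fun z _ => hpos y z) Finset.univ_nonempty
  have hZpos : ∀ z, 0 < pZ z := fun z => by
    rw [hpZ]; exact Finset.sum_pos (fun y _ => hpos y z) Finset.univ_nonempty
  have hle : ∀ F : Y × Z → ℝ, ((∑ y : Y, ∑ z : Z, p (y, z) * F (y, z)) -
          Real.log (∑ y : Y, ∑ z : Z, pY y * pZ z * Real.exp (F (y, z)))) ≤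
      ∑ y : Y, ∑ z : Z, p (y, z) * Real.log (p (y, z) / (pY y * pZ z)) := by
    intro F
    have h := dv_le_aux p (fun yz => pY yz.1 * pZ yz.2) F (fun yz => hpos yz.1 yz.2)
      (fun yz => mul_pos (hYpos _) (hZpos _)) hsum
    simpa only [Fintype.sum_prod_type] using h
  apply le_antisymm
  · exact ciSup_le hle
  · refine le_ciSup_of_le ⟨_, Set.forall_mem_range.2 hle⟩
      (fun yz => Real.log (p yz / (pY yz.1 * pZ yz.2))) ?_
    have h1 : ∑ y : Y, ∑ z : Z, pY y * pZ z *
        Real.exp (Real.log (p (y, z) / (pY y * pZ z))) = 1 := by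
      rw [← hsum, Fintype.sum_prod_type]
      refine Finset.sum_congr rfl fun y _ => Finset.sum_congr rfl fun z _ => ?_
      have hy := hYpos y
      have hz := hZpos z
      rw [Real.exp_log (div_pos (hpos y z) (mul_pos hy hz))]
      field_simp
    simp only [h1, Real.log_one, sub_zero, le_refl]
end

section
/- Let Ω be a nonempty finite type and let P, Q : Ω → ℝ be probability mass functions with P(ω) > 0 and Q(ω) > 0 for all ω. Then for every function F : Ω → ℝ, KL(P‖Q) = Σ_ω P(ω) · log( P(ω) / Q(ω) ) ≥ Σ_ω P(ω) · F(ω) − log( Σ_ω Q(ω) · exp(F(ω)) ) (the Donsker–Varadhan inequality for Kullback–Leibler divergence on a finite space). -/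
open Real Finset

/-- Donsker–Varadhan inequality for the Kullback–Leibler divergence on a finite
space: for strictly positive pmfs `P`, `Q` on `Ω` and any `F : Ω → ℝ`,
`KL(P‖Q) ≥ Σ_ω P ω * F ω − log (Σ_ω Q ω * exp (F ω))`. -/
theorem kl_ge_donsker_varadhan {Ω : Type*} [Fintype Ω] [Nonempty Ω]
    (P Q : Ω → ℝ)
    (hPpos : ∀ ω, 0 < P ω) (hPsum : ∑ ω : Ω, P ω = 1)
    (hQpos : ∀ ω, 0 < Q ω) (hQsum : ∑ ω : Ω, Q ω = 1) :
    ∀ F : Ω → ℝ,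
      (∑ ω : Ω, P ω * Real.log (P ω / Q ω)) ≥
        (∑ ω : Ω, P ω * F ω) - Real.log (∑ ω : Ω, Q ω * Real.exp (F ω)) := by
  intro F
  set Z := ∑ ω : Ω, Q ω * Real.exp (F ω) with hZ
  have hZpos : 0 < Z :=
    Finset.sum_pos (fun ω _ => mul_pos (hQpos ω) (Real.exp_pos _)) Finset.univ_nonempty
  have key : ∀ ω, P ω * F ω - P ω * Real.log Z - P ω * Real.log (P ω / Q ω)
      ≤ Q ω * Real.exp (F ω) / Z - P ω := by
    intro ω
    have hP := hPpos ω
    have hQ := hQpos ω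
    have hE := Real.exp_pos (F ω)
    have h := Real.log_le_sub_one_of_pos
      (show 0 < Q ω * Real.exp (F ω) / (Z * P ω) by positivity)
    rw [Real.log_div (by positivity) (by positivity), Real.log_mul hQ.ne' hE.ne',
      Real.log_mul hZpos.ne' hP.ne', Real.log_exp] at h
    have h2 := mul_le_mul_of_nonneg_left h hP.le
    have h3 : P ω * (Q ω * Real.exp (F ω) / (Z * P ω) - 1)
        = Q ω * Real.exp (F ω) / Z - P ω := by
      field_simp
    rw [h3] at h2
    rw [Real.log_div hP.ne' hQ.ne']
    linarith
  have hs := Finset.sum_le_sum (fun ω (_ : ω ∈ Finset.univ) => key ω)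
  rw [Finset.sum_sub_distrib, Finset.sum_sub_distrib, Finset.sum_sub_distrib,
    ← Finset.sum_mul, ← Finset.sum_div, ← hZ, hPsum, div_self hZpos.ne'] at hs
  linarith
end

section
/- Let Z and X be nonempty finite types and let p : Z × X → ℝ be a joint probability mass function with p(z,x) > 0 for all z, x, with marginals p_Z, p_X and conditional p(x|z) = p(z,x)/p_Z(z). Then L_UB − MI(Z,X) = Σ_z p_Z(z) · KL( p_X ‖ p(·|z) ), where MI(Z,X) = Σ_{z,x} p(z,x) · log( p(z,x) / (p_Z(z) · p_X(x)) ), L_UB = Σ_{z,x} p(z,x) · log p(x|z) − Σ_{z,x} p_Z(z) · p_X(x) · log p(x|z), and KL( p_X ‖ p(·|z) ) = Σ_x p_X(x) · log( p_X(x) / p(x|z) ). In particular each summand is nonnegative, which re-proves that MI(Z,X) ≤ L_UB. -/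
open Real Finset

/-- For a strictly positive joint pmf `p` on `Z × X`,
`L_UB − MI(Z,X) = Σ_z pZ z * KL(pX ‖ pc z)`, where
`KL(pX ‖ pc z) = Σ_x pX x * log (pX x / pc z x)`; in particular each summand is
nonnegative, which re-proves `MI(Z,X) ≤ L_UB`. -/
theorem LUB_sub_mi_eq_kl {Z X : Type*} [Fintype Z] [Fintype X] [Nonempty Z] [Nonempty X]
    (p : Z × X → ℝ) (pZ : Z → ℝ) (pX : X → ℝ) (pc : Z → X → ℝ)
    (hpos : ∀ z x, 0 < p (z, x))
    (hsum : ∑ zx : Z × X, p zx = 1)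
    (hpZ : ∀ z, pZ z = ∑ x : X, p (z, x))
    (hpX : ∀ x, pX x = ∑ z : Z, p (z, x))
    (hpc : ∀ z x, pc z x = p (z, x) / pZ z) :
    (((∑ z : Z, ∑ x : X, p (z, x) * Real.log (pc z x)) -
          (∑ z : Z, ∑ x : X, pZ z * pX x * Real.log (pc z x))) -
        (∑ z : Z, ∑ x : X, p (z, x) * Real.log (p (z, x) / (pZ z * pX x))) =
      ∑ z : Z, pZ z * ∑ x : X, pX x * Real.log (pX x / pc z x)) ∧
      (∀ z : Z, 0 ≤ pZ z * ∑ x : X, pX x * Real.log (pX x / pc z x)) ∧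
      ((∑ z : Z, ∑ x : X, p (z, x) * Real.log (p (z, x) / (pZ z * pX x))) ≤
        (∑ z : Z, ∑ x : X, p (z, x) * Real.log (pc z x)) -
          (∑ z : Z, ∑ x : X, pZ z * pX x * Real.log (pc z x))) := by
  have hZ : ∀ z, 0 < pZ z := fun z => by
    rw [hpZ]; exact Finset.sum_pos (fun x _ => hpos z x) Finset.univ_nonempty
  have hX : ∀ x, 0 < pX x := fun x => by
    rw [hpX]; exact Finset.sum_pos (fun z _ => hpos z x) Finset.univ_nonempty
  have hc : ∀ z x, 0 < pc z x := fun z x => by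
    rw [hpc]; exact div_pos (hpos z x) (hZ z)
  have sZ : ∑ z, pZ z = 1 := by
    rw [← hsum, Fintype.sum_prod_type]
    exact Finset.sum_congr rfl fun z _ => hpZ z
  have sX : ∑ x, pX x = 1 := by
    rw [← hsum, Fintype.sum_prod_type_right]
    exact Finset.sum_congr rfl fun x _ => hpX x
  have sc : ∀ z, ∑ x, pc z x = 1 := fun z => by
    simp_rw [hpc]
    rw [← Finset.sum_div, ← hpZ, div_self (hZ z).ne']
  have key : ∑ z, ∑ x, p (z, x) * Real.log (pX x)
      = ∑ z, ∑ x, pZ z * pX x * Real.log (pX x) := by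
    rw [Finset.sum_comm, Finset.sum_comm (f := fun z x => pZ z * pX x * Real.log (pX x))]
    refine Finset.sum_congr rfl fun x _ => ?_
    simp_rw [mul_assoc]
    rw [← Finset.sum_mul, ← Finset.sum_mul, ← hpX, sZ, one_mul]
  have e1 : ∑ z, ∑ x, p (z, x) * Real.log (p (z, x) / (pZ z * pX x))
      = (∑ z, ∑ x, p (z, x) * Real.log (pc z x))
        - ∑ z, ∑ x, p (z, x) * Real.log (pX x) := by
    simp_rw [← Finset.sum_sub_distrib]
    refine Finset.sum_congr rfl fun z _ => Finset.sum_congr rfl fun x _ => ?_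
    rw [← div_div, ← hpc, Real.log_div (hc z x).ne' (hX x).ne', mul_sub]
  have e2 : ∑ z, pZ z * ∑ x, pX x * Real.log (pX x / pc z x)
      = (∑ z, ∑ x, pZ z * pX x * Real.log (pX x))
        - ∑ z, ∑ x, pZ z * pX x * Real.log (pc z x) := by
    simp_rw [← Finset.sum_sub_distrib, Finset.mul_sum]
    refine Finset.sum_congr rfl fun z _ => Finset.sum_congr rfl fun x _ => ?_
    rw [Real.log_div (hX x).ne' (hc z x).ne']
    ring
  have nn : ∀ z : Z, 0 ≤ pZ z * ∑ x : X, pX x * Real.log (pX x / pc z x) := fun z => by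
    refine mul_nonneg (hZ z).le ?_
    have h : ∑ x, (pX x - pc z x) ≤ ∑ x, pX x * Real.log (pX x / pc z x) := by
      refine Finset.sum_le_sum fun x _ => ?_
      have h1 := Real.one_sub_inv_le_log_of_pos (div_pos (hX x) (hc z x))
      have h2 := mul_le_mul_of_nonneg_left h1 (hX x).le
      have h3 : pX x * (1 - (pX x / pc z x)⁻¹) = pX x - pc z x := by
        have := (hX x).ne'
        rw [inv_div]
        field_simp
      linarith
    rw [Finset.sum_sub_distrib, sX, sc] at h
    linarith
  have main := Finset.sum_nonneg (fun z (_ : z ∈ Finset.univ) => nn z)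
  refine ⟨?_, nn, ?_⟩
  · linarith
  · linarith
end
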